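/- There exists a constant K > 0 such that the following holds for the maximin voting rule. Let V be an n-vote election over m candidates whose margin of victory is at least εn, with winner w, and let δ ∈ (0,1). If ℓ ≥ K·ln(m/δ)/ε² and we draw ℓ votes i.i.d. uniformly at random (with replacement) from V, then with probability at least 1 − δ: the empirical pairwise margins D̂(x,y) (computed from the sample and scaled by n/ℓ) satisfy |D̂(x,y) − D(x,y)| ≤ εn/2 for all pairs of distinct candidates x, y, and consequently the candidate maximizing the empirical maximin score min_{y ≠ x} D̂(x,y) equals w. -/

import Mathlib

/-!
For candidates `x ≠ w`, replacing `k` votes that rank `w` above its worst opponent by a vote ranking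
`x` first and `w` last lowers the score of `w` by at least `2k` and does not lower that of `x`.
Hence a margin of victory of `εn` forces the score of `w` to exceed every other score by `2εn`, and
`w` still wins once every pairwise margin is estimated within `εn/2`. By Hoeffding's inequality and
a union bound over the `m²` ordered pairs of candidates, this fails with probability at most
`m² exp(-ℓε²/8)`.
-/

/-- Pairwise margin D(x,y): number of votes preferring x to y minus the number
preferring y to x. A vote is a permutation of `Fin m` (candidate `c` is ranked at
position `v c`, position `0` being the top, so `v x < v y` means x is preferred). -/
noncomputable def pairMargin {m n : ℕ} (V : Fin n → Equiv.Perm (Fin m))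
    (x y : Fin m) : ℝ :=
  (Nat.card {i : Fin n // (V i) x < (V i) y} : ℝ)
    - (Nat.card {i : Fin n // (V i) y < (V i) x} : ℝ)

/-- Maximin score of a candidate x: min over y ≠ x of D(x,y). -/
noncomputable def maximinScore {m n : ℕ} (V : Fin n → Equiv.Perm (Fin m))
    (x : Fin m) : ℝ :=
  ⨅ y : {y : Fin m // y ≠ x}, pairMargin V x (y : Fin m)

open MeasureTheory ProbabilityTheory

section UniformOn

variable {Ω : Type*} [MeasurableSpace Ω] [MeasurableSingletonClass Ω]

lemma measureReal_uniformOn_univ [Finite Ω] (S : Set Ω) :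
    (uniformOn Set.univ).real S = (Nat.card S : ℝ) / Nat.card Ω := by
  have := Fintype.ofFinite Ω
  simp [Measure.real, uniformOn_univ, Measure.count_apply_finite _ S.toFinite, Nat.card_coe_set_eq,
    Set.ncard_eq_toFinset_card S]

lemma integral_uniformOn_univ [Fintype Ω] (f : Ω → ℝ) :
    ∫ ω, f ω ∂uniformOn Set.univ = (∑ ω, f ω) / Fintype.card Ω := by
  simp [uniformOn, ProbabilityTheory.cond, div_eq_inv_mul]

lemma mul_natCard_le_of_le_measureReal_uniformOn [Finite Ω] {p : Ω → Prop} {c : ℝ}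
    (h : c ≤ (uniformOn Set.univ).real {ω | p ω}) :
    c * Nat.card Ω ≤ Nat.card {ω // p ω} := by
  rw [measureReal_uniformOn_univ] at h
  exact mul_le_of_le_div₀ (by positivity) (by positivity) h

end UniformOn

lemma measureReal_pi_sum_sub_integral_ge_le {ι Ω : Type*} [Fintype ι] [MeasurableSpace Ω]
    {μ : Measure Ω} [IsProbabilityMeasure μ] {X : Ω → ℝ} {a b : ℝ} (hX : Measurable X)
    (hab : ∀ ω, X ω ∈ Set.Icc a b) {t : ℝ} (ht : 0 ≤ t) :
    (Measure.pi fun _ : ι => μ).real {s | t ≤ ∑ j, (X (s j) - ∫ ω, X ω ∂μ)} ≤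
      Real.exp (-(2 * t ^ 2) / (Fintype.card ι * (b - a) ^ 2)) := by
  have hindep : iIndepFun (fun (j : ι) s => X (s j) - ∫ ω, X ω ∂μ) (Measure.pi fun _ : ι => μ) :=
    iIndepFun_pi fun _ => (hX.sub_const _).aemeasurable
  have hsubG (j : ι) : HasSubgaussianMGF (fun s : ι → Ω => X (s j) - ∫ ω, X ω ∂μ)
      ((‖b - a‖₊ / 2) ^ 2) (Measure.pi fun _ : ι => μ) := by
    rw [← integral_comp_eval (μ := fun _ : ι => μ) (i := j) hX.aestronglyMeasurable]
    exact hasSubgaussianMGF_of_mem_Icc (hX.comp (measurable_pi_apply j)).aemeasurable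
      (ae_of_all _ fun s => hab (s j))
  refine (HasSubgaussianMGF.measure_sum_ge_le_of_iIndepFun hindep
    (fun j (_ : j ∈ Finset.univ) => hsubG j) ht).trans_eq ?_
  congr 1
  simp only [Finset.sum_const, Finset.card_univ, nsmul_eq_mul, NNReal.coe_mul, NNReal.coe_natCast,
    NNReal.coe_pow, NNReal.coe_div, NNReal.coe_ofNat, coe_nnnorm, Real.norm_eq_abs, div_pow, sq_abs]
  rw [← mul_div_mul_left (-t ^ 2) _ (two_ne_zero' ℝ)]
  congr 1 <;> ring

lemma iInf_le_iInf_add_of_forall_le_add {ι : Type*} [Finite ι] [Nonempty ι] {f g : ι → ℝ} {t : ℝ}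
    (h : ∀ i, f i ≤ g i + t) : ⨅ i, f i ≤ (⨅ i, g i) + t := by
  obtain ⟨i, hi⟩ := exists_eq_ciInf_of_finite (f := g)
  calc ⨅ i, f i ≤ f i := ciInf_le (Set.finite_range f).bddBelow i
    _ ≤ (⨅ i, g i) + t := hi ▸ h i

lemma card_piecewise_ne_le {ι : Type*} {β : ι → Type*} [DecidableEq ι] (T : Finset ι)
    (f g : ∀ i, β i) : Nat.card {i // T.piecewise f g i ≠ g i} ≤ T.card := by
  rw [← Nat.card_eq_finsetCard]
  exact Nat.card_le_card_of_injective
    (Subtype.map id fun i hi => by_contra fun hiT => hi (T.piecewise_eq_of_notMem f g hiT))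
    (Subtype.map_injective _ Function.injective_id)

section Profiles

variable {m n ℓ : ℕ} {V : Fin n → Equiv.Perm (Fin m)}

/-- The contribution of a single vote to the pairwise margin: `1` if it prefers `x` to `y`, `-1` if
it prefers `y` to `x`, and `0` if `x = y`. -/
noncomputable def prefSign (v : Equiv.Perm (Fin m)) (x y : Fin m) : ℝ :=
  (if v x < v y then 1 else 0) - (if v y < v x then 1 else 0)

lemma prefSign_of_lt {v : Equiv.Perm (Fin m)} {x y : Fin m} (h : v x < v y) :
    prefSign v x y = 1 := by
  simp [prefSign, h, h.le]

lemma prefSign_of_gt {v : Equiv.Perm (Fin m)} {x y : Fin m} (h : v y < v x) :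
    prefSign v x y = -1 := by
  simp [prefSign, h, h.le]

lemma prefSign_mem_Icc (v : Equiv.Perm (Fin m)) (x y : Fin m) :
    prefSign v x y ∈ Set.Icc (-1) 1 := by
  unfold prefSign
  split_ifs <;> norm_num

lemma pairMargin_eq_sum_prefSign (V : Fin n → Equiv.Perm (Fin m)) (x y : Fin m) :
    pairMargin V x y = ∑ i, prefSign (V i) x y := by
  simp [pairMargin, prefSign, Fintype.card_subtype]

lemma pairMargin_swap (V : Fin n → Equiv.Perm (Fin m)) (x y : Fin m) :
    pairMargin V y x = -pairMargin V x y :=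
  (neg_sub _ _).symm

lemma pairMargin_eq_two_mul_card_sub (V : Fin n → Equiv.Perm (Fin m)) {x y : Fin m} (h : x ≠ y) :
    pairMargin V x y = 2 * (Finset.univ.filter fun i => V i x < V i y).card - n := by
  have hsign (i : Fin n) : prefSign (V i) x y = 2 * (if V i x < V i y then 1 else 0) - 1 := by
    rcases lt_or_gt_of_ne ((V i).injective.ne h) with hlt | hgt
    · rw [prefSign_of_lt hlt, if_pos hlt]; norm_num
    · rw [prefSign_of_gt hgt, if_neg hgt.not_gt]; norm_num
  rw [pairMargin_eq_sum_prefSign, Finset.sum_congr rfl fun i _ => hsign i, Finset.sum_sub_distrib,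
    ← Finset.mul_sum, Finset.sum_boole, Finset.sum_const, Finset.card_fin, nsmul_one]

lemma pairMargin_piecewise (T : Finset (Fin n)) (V' V : Fin n → Equiv.Perm (Fin m)) (x y : Fin m) :
    pairMargin (T.piecewise V' V) x y =
      pairMargin V x y + ∑ i ∈ T, (prefSign (V' i) x y - prefSign (V i) x y) := by
  rw [← sub_eq_iff_eq_add', pairMargin_eq_sum_prefSign, pairMargin_eq_sum_prefSign,
    ← Finset.sum_sub_distrib]
  refine (Finset.sum_subset_zero_on_sdiff T.subset_univ (fun i hi => ?_) fun i hi => ?_).symm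
  · rw [T.piecewise_eq_of_notMem _ _ (Finset.mem_sdiff.mp hi).2, sub_self]
  · rw [T.piecewise_eq_of_mem _ _ hi]

lemma maximinScore_le_pairMargin (V : Fin n → Equiv.Perm (Fin m)) {x y : Fin m} (h : y ≠ x) :
    maximinScore V x ≤ pairMargin V x y :=
  ciInf_le (Set.finite_range fun y : {y // y ≠ x} => pairMargin V x y).bddBelow ⟨y, h⟩

lemma exists_pairMargin_eq_maximinScore [Nontrivial (Fin m)] (V : Fin n → Equiv.Perm (Fin m))
    (x : Fin m) : ∃ y ≠ x, pairMargin V x y = maximinScore V x := by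
  have : Nonempty {y // y ≠ x} := nonempty_subtype.mpr (exists_ne x)
  obtain ⟨⟨y, hy⟩, h⟩ :=
    exists_eq_ciInf_of_finite (f := fun y : {y // y ≠ x} => pairMargin V x y)
  exact ⟨y, hy, h⟩

lemma exists_perm_first_last {x w : Fin m} (h : x ≠ w) :
    ∃ v : Equiv.Perm (Fin m), (∀ y ≠ x, v x < v y) ∧ ∀ y ≠ w, v y < v w := by
  obtain ⟨k, rfl⟩ := Nat.exists_eq_add_of_le' (Fin.nontrivial_iff_two_le.mp ⟨x, w, h⟩)
  obtain ⟨v, hx, hw⟩ := MulAction.is_two_pretransitive_iff.mp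
    (Equiv.Perm.isMultiplyPretransitive (Fin (k + 2)) 2) h (Fin.last_pos (n := k)).ne
  rw [Equiv.Perm.smul_def] at hx hw
  refine ⟨v, fun y hy => ?_, fun y hy => ?_⟩
  · exact hx ▸ Fin.pos_of_ne_zero (hx ▸ v.injective.ne hy)
  · exact hw ▸ Fin.lt_last_iff_ne_last.mpr (hw ▸ v.injective.ne hy)

lemma exists_profile_maximinScore_le {x w : Fin m} (hxw : x ≠ w)
    (hle : maximinScore V x ≤ maximinScore V w) :
    ∃ V' : Fin n → Equiv.Perm (Fin m), maximinScore V' w ≤ maximinScore V' x ∧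
      2 * (Nat.card {i // V' i ≠ V i} : ℝ) ≤ maximinScore V w - maximinScore V x := by
  classical
  have : Nontrivial (Fin m) := ⟨x, w, hxw⟩
  obtain ⟨y, hyw, hy⟩ := exists_pairMargin_eq_maximinScore V w
  obtain ⟨z, hzx, hz⟩ := exists_pairMargin_eq_maximinScore V x
  have hcard_y := pairMargin_eq_two_mul_card_sub V hyw.symm
  have hcard_z := pairMargin_eq_two_mul_card_sub V hzx.symm
  set A := Finset.univ.filter fun i => V i w < V i y
  set B := Finset.univ.filter fun i => V i x < V i z
  have hBA : B.card ≤ A.card := by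
    have : (B.card : ℝ) ≤ A.card := by linarith
    exact_mod_cast this
  obtain ⟨T, hTA, hT⟩ := Finset.exists_subset_card_eq (Nat.sub_le A.card B.card)
  have hT_gap : 2 * (T.card : ℝ) = maximinScore V w - maximinScore V x := by
    rw [hT, Nat.cast_sub hBA]
    linarith
  obtain ⟨v, hv_first, hv_last⟩ := exists_perm_first_last hxw
  refine ⟨T.piecewise (fun _ => v) V, ?_, ?_⟩
  · calc maximinScore (T.piecewise (fun _ => v) V) w
        ≤ pairMargin (T.piecewise (fun _ => v) V) w y := maximinScore_le_pairMargin _ hyw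
      _ = maximinScore V w - 2 * T.card := by
        have hflip : ∀ i ∈ T, prefSign v w y - prefSign (V i) w y = -2 := fun i hi => by
          have hwy : V i w < V i y := (Finset.mem_filter.mp (hTA hi)).2
          rw [prefSign_of_gt (hv_last y hyw), prefSign_of_lt hwy]
          norm_num
        rw [pairMargin_piecewise, hy, Finset.sum_congr rfl hflip, Finset.sum_const, nsmul_eq_mul]
        ring
      _ = maximinScore V x := by rw [hT_gap]; ring
      _ ≤ maximinScore (T.piecewise (fun _ => v) V) x := by
        obtain ⟨u, hux, hu⟩ := exists_pairMargin_eq_maximinScore (T.piecewise (fun _ => v) V) x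
        rw [← hu, pairMargin_piecewise]
        refine (maximinScore_le_pairMargin V hux).trans
          (le_add_of_nonneg_right (Finset.sum_nonneg fun i _ => ?_))
        rw [prefSign_of_lt (hv_first u hux)]
        exact sub_nonneg.mpr (prefSign_mem_Icc _ _ _).2
  · rw [← hT_gap]
    gcongr
    exact card_piecewise_ne_le T _ V

/-- The estimate `D̂(x,y)` of the pairwise margin from the sample `j ↦ V (s j)` of `ℓ` votes, given
by the indices `s` of the votes drawn. -/
noncomputable def empiricalMargin (V : Fin n → Equiv.Perm (Fin m)) (s : Fin ℓ → Fin n)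
    (x y : Fin m) : ℝ :=
  n / ℓ * pairMargin (fun j => V (s j)) x y

/-- The maximin score of `x` computed from the estimated margins `D̂`. -/
noncomputable def empiricalMaximinScore (V : Fin n → Equiv.Perm (Fin m)) (s : Fin ℓ → Fin n)
    (x : Fin m) : ℝ :=
  ⨅ y : {y : Fin m // y ≠ x}, empiricalMargin V s x y

lemma empiricalMargin_swap (V : Fin n → Equiv.Perm (Fin m)) (s : Fin ℓ → Fin n) (x y : Fin m) :
    empiricalMargin V s y x = -empiricalMargin V s x y := by
  rw [empiricalMargin, pairMargin_swap, mul_neg, empiricalMargin]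

lemma abs_empiricalMaximinScore_sub_le [Nontrivial (Fin m)] {s : Fin ℓ → Fin n} {t : ℝ}
    (h : ∀ x y, |empiricalMargin V s x y - pairMargin V x y| ≤ t) (x : Fin m) :
    |empiricalMaximinScore V s x - maximinScore V x| ≤ t := by
  have : Nonempty {y // y ≠ x} := nonempty_subtype.mpr (exists_ne x)
  have hupper : empiricalMaximinScore V s x ≤ maximinScore V x + t :=
    iInf_le_iInf_add_of_forall_le_add fun y => by linarith [(abs_le.mp (h x y)).2]
  have hlower : maximinScore V x ≤ empiricalMaximinScore V s x + t :=
    iInf_le_iInf_add_of_forall_le_add fun y => by linarith [(abs_le.mp (h x y)).1]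
  rw [abs_le]
  constructor <;> linarith

lemma empiricalMaximinScore_lt {s : Fin ℓ → Fin n} {t : ℝ} {x w : Fin m} (hxw : x ≠ w)
    (h : ∀ x y, |empiricalMargin V s x y - pairMargin V x y| ≤ t)
    (hgap : 2 * t < maximinScore V w - maximinScore V x) :
    empiricalMaximinScore V s x < empiricalMaximinScore V s w := by
  have : Nontrivial (Fin m) := ⟨x, w, hxw⟩
  have hx := (abs_le.mp (abs_empiricalMaximinScore_sub_le h x)).2
  have hw := (abs_le.mp (abs_empiricalMaximinScore_sub_le h w)).1
  linarith

lemma sum_prefSign_sub_mean (hn : 0 < n) (hℓ : 0 < ℓ) (s : Fin ℓ → Fin n) (x y : Fin m) :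
    ∑ j, (prefSign (V (s j)) x y - pairMargin V x y / n) =
      ℓ / n * (empiricalMargin V s x y - pairMargin V x y) := by
  rw [Finset.sum_sub_distrib, ← pairMargin_eq_sum_prefSign fun j => V (s j), empiricalMargin]
  simp only [Finset.sum_const, Finset.card_univ, Fintype.card_fin, nsmul_eq_mul]
  field_simp

lemma measureReal_empiricalMargin_sub_ge_le (hn : 0 < n) (hℓ : 0 < ℓ) {ε : ℝ} (hε : 0 ≤ ε)
    (x y : Fin m) :
    (uniformOn Set.univ).real
        {s : Fin ℓ → Fin n | ε * n / 2 ≤ empiricalMargin V s x y - pairMargin V x y} ≤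
      Real.exp (-(ℓ * ε ^ 2 / 8)) := by
  have : NeZero n := ⟨hn.ne'⟩
  have : IsProbabilityMeasure (uniformOn (Set.univ : Set (Fin n))) :=
    isProbabilityMeasure_uniformOn Set.finite_univ Set.univ_nonempty
  have hmean : ∫ i, prefSign (V i) x y ∂uniformOn Set.univ = pairMargin V x y / n := by
    rw [integral_uniformOn_univ, ← pairMargin_eq_sum_prefSign, Fintype.card_fin]
  have hevent (s : Fin ℓ → Fin n) :
      ε * n / 2 ≤ empiricalMargin V s x y - pairMargin V x y ↔
        ℓ * (ε / 2) ≤ ∑ j, (prefSign (V (s j)) x y - pairMargin V x y / n) := by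
    rw [sum_prefSign_sub_mean hn hℓ, ← mul_le_mul_iff_right₀ (by positivity : (0 : ℝ) < ℓ / n)]
    field_simp
  have hoeffding := measureReal_pi_sum_sub_integral_ge_le (ι := Fin ℓ)
    (μ := uniformOn (Set.univ : Set (Fin n))) (measurable_of_finite fun i => prefSign (V i) x y)
    (fun i => prefSign_mem_Icc (V i) x y) (by positivity : 0 ≤ ℓ * (ε / 2))
  rw [hmean, ← uniformOn_pi, Set.pi_univ] at hoeffding
  simp only [hevent]
  refine hoeffding.trans_eq ?_
  congr 1
  rw [Fintype.card_fin]
  field_simp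
  ring

lemma one_sub_le_measureReal_forall_abs_empiricalMargin_sub_le (hn : 0 < n) (hℓ : 0 < ℓ) {ε : ℝ}
    (hε : 0 ≤ ε) (V : Fin n → Equiv.Perm (Fin m)) :
    1 - m ^ 2 * Real.exp (-(ℓ * ε ^ 2 / 8)) ≤ (uniformOn Set.univ).real
      {s : Fin ℓ → Fin n | ∀ x y, |empiricalMargin V s x y - pairMargin V x y| ≤ ε * n / 2} := by
  have : NeZero n := ⟨hn.ne'⟩
  have : IsProbabilityMeasure (uniformOn (Set.univ : Set (Fin ℓ → Fin n))) :=
    isProbabilityMeasure_uniformOn Set.finite_univ Set.univ_nonempty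
  let bad (p : Fin m × Fin m) : Set (Fin ℓ → Fin n) :=
    {s | ε * n / 2 ≤ empiricalMargin V s p.1 p.2 - pairMargin V p.1 p.2}
  have hbad : (uniformOn Set.univ).real (⋃ p, bad p) ≤ m ^ 2 * Real.exp (-(ℓ * ε ^ 2 / 8)) := by
    calc (uniformOn Set.univ).real (⋃ p, bad p)
        ≤ ∑ p, (uniformOn Set.univ).real (bad p) := measureReal_iUnion_fintype_le bad
      _ ≤ ∑ _p : Fin m × Fin m, Real.exp (-(ℓ * ε ^ 2 / 8)) :=
        Finset.sum_le_sum fun p _ => measureReal_empiricalMargin_sub_ge_le hn hℓ hε p.1 p.2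
      _ = m ^ 2 * Real.exp (-(ℓ * ε ^ 2 / 8)) := by simp [sq]
  calc 1 - m ^ 2 * Real.exp (-(ℓ * ε ^ 2 / 8))
      ≤ 1 - (uniformOn Set.univ).real (⋃ p, bad p) := by gcongr
    _ = (uniformOn Set.univ).real (⋃ p, bad p)ᶜ :=
      (probReal_compl_eq_one_sub (Set.toFinite _).measurableSet).symm
    _ ≤ _ := by
      refine measureReal_mono fun s hs x y => ?_
      have hgood (x y : Fin m) : empiricalMargin V s x y - pairMargin V x y < ε * n / 2 :=
        not_le.mp fun h => hs (Set.mem_iUnion.mpr ⟨(x, y), h⟩)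
      have hyx := hgood y x
      rw [empiricalMargin_swap, pairMargin_swap] at hyx
      rw [abs_le]
      constructor <;> linarith [hgood x y]

end Profiles

lemma sq_mul_exp_neg_le {M δ c : ℝ} (hM : 0 < M) (hδ : 0 < δ) (hδ1 : δ ≤ 1)
    (hc : 2 * Real.log (M / δ) ≤ c) : M ^ 2 * Real.exp (-c) ≤ δ := by
  calc M ^ 2 * Real.exp (-c) ≤ M ^ 2 * Real.exp (-(2 * Real.log (M / δ))) := by gcongr
    _ = δ ^ 2 := by
      rw [Real.exp_neg, mul_comm, mul_comm 2, Real.exp_mul, Real.exp_log (by positivity)]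
      norm_cast
      field_simp
    _ ≤ δ := by nlinarith

/-- Sample complexity O(log(m/δ)/ε²) for winner determination under the maximin
voting rule: if the margin of victory is at least εn with unique winner w and
ℓ ≥ K·ln(m/δ)/ε², then with probability at least 1 - δ over the n^ℓ equiprobable
tuples of ℓ i.i.d. uniform vote samples, the empirical pairwise margins
D̂(x,y) = (n/ℓ)·(pairwise margin on the sample) satisfy |D̂(x,y) - D(x,y)| ≤ εn/2 for
all distinct x, y, and w is the unique maximizer of the empirical maximin score
min_{y ≠ x} D̂(x,y). -/
theorem maximin_sample_complexity :
    ∃ K : ℝ, 0 < K ∧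
      ∀ (m n : ℕ) (ε δ : ℝ), 0 < ε → ε < 1 → 0 < δ → δ < 1 →
      ∀ (V : Fin n → Equiv.Perm (Fin m)) (w : Fin m),
        (∀ x : Fin m, x ≠ w → maximinScore V x < maximinScore V w) →
        (∀ V' : Fin n → Equiv.Perm (Fin m),
          (∃ x : Fin m, x ≠ w ∧ maximinScore V' w ≤ maximinScore V' x) →
          ε * n ≤ (Nat.card {i : Fin n // V' i ≠ V i} : ℝ)) →
        ∀ ℓ : ℕ, K * Real.log ((m : ℝ) / δ) / ε ^ 2 ≤ ℓ →
          (1 - δ) * (n : ℝ) ^ ℓ ≤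
            (Nat.card {s : Fin ℓ → Fin n //
              (∀ x y : Fin m, x ≠ y →
                |(n : ℝ) / ℓ * pairMargin (fun j => V (s j)) x y - pairMargin V x y|
                  ≤ ε * n / 2) ∧
              (∀ x : Fin m, x ≠ w →
                (⨅ y : {y : Fin m // y ≠ x},
                    (n : ℝ) / ℓ * pairMargin (fun j => V (s j)) x (y : Fin m))
                  < ⨅ y : {y : Fin m // y ≠ w},
                    (n : ℝ) / ℓ * pairMargin (fun j => V (s j)) w (y : Fin m))} : ℝ) := by
  refine ⟨16, by norm_num, fun m n ε δ hε _ hδ hδ1 V w hw hMOV ℓ hℓ => ?_⟩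
  have hm : (1 : ℝ) ≤ m := by exact_mod_cast w.pos
  have hlog : 0 < Real.log (m / δ) := Real.log_pos (by rw [lt_div_iff₀ hδ]; linarith)
  have hℓ_pos : 0 < ℓ := Nat.cast_pos.mp (lt_of_lt_of_le (by positivity) hℓ)
  rcases n.eq_zero_or_pos with rfl | hn
  · simp [hℓ_pos.ne']
  have hgap (x : Fin m) (hx : x ≠ w) : 2 * (ε * n / 2) < maximinScore V w - maximinScore V x := by
    obtain ⟨V', hV', hcard⟩ := exists_profile_maximinScore_le hx (hw x hx).le
    linarith [hw x hx, hMOV V' ⟨x, hx, hV'⟩]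
  have hfail : m ^ 2 * Real.exp (-(ℓ * ε ^ 2 / 8)) ≤ δ := by
    rw [div_le_iff₀ (by positivity)] at hℓ
    exact sq_mul_exp_neg_le (by linarith) hδ hδ1.le (by linarith)
  rw [show (n : ℝ) ^ ℓ = Nat.card (Fin ℓ → Fin n) by simp]
  refine mul_natCard_le_of_le_measureReal_uniformOn ((sub_le_sub_left hfail 1).trans
    ((one_sub_le_measureReal_forall_abs_empiricalMargin_sub_le hn hℓ_pos hε.le V).trans
      (measureReal_mono fun s hs => ?_)))
  exact ⟨fun x y _ => hs x y, fun x hx => empiricalMaximinScore_lt hx hs (hgap x hx)⟩
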